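/- Heteroclinic asymptotics of the separatrix (Lemma 5.1, part 2). Let L_1 > 0, 0 < Γ̃_2 < √(3/5)·L_1, let χ, A_2 be as defined, and let γ_1(t) ∈ (0,π), Γ_1(t), γ̃_2(t) be the explicit separatrix parametrisation. Let γ_1^min ∈ (0, π/2) be the unique solution of sin²γ_1^min = 2/(5(1 − Γ̃_2²/L_1²)) and γ_1^max = π − γ_1^min. Then, as t → +∞, (γ_1(t), Γ_1(t)) → (γ_1^min, L_1) and γ̃_2(t) − γ̃_2^0 − (2Γ̃_2/L_1²)t → arctan(χ^{−1}); and as t → −∞, (γ_1(t), Γ_1(t)) → (γ_1^max, L_1) and γ̃_2(t) − γ̃_2^0 − (2Γ̃_2/L_1²)t → −arctan(χ^{−1}). In particular the separatrix is a heteroclinic orbit joining the periodic orbit through (γ_1^max, L_1) backward in time to the periodic orbit through (γ_1^min, L_1) forward in time. -/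

import Mathlib

noncomputable section

open Real Filter Topology

/-!
In the rescaled time `τ = A₂ t`, and up to the linear drift of `γ̃₂`, the separatrix depends on time
only through `tanh τ`: for all real `a` and `b` one has
`√(a + b sinh² τ) / cosh τ = √(a + (b - a) tanh² τ)`. Since `tanh τ → ±1` as `τ → ±∞`, the angle and
the momentum converge, and `cos γ₁` tends to `±√(3/5) / √(1 + χ²)`. This value is `±cos γ₁ᵐⁱⁿ`,
because `1 + χ² = (1 - e) / (1 - 5e/3)` with `e = Γ̃₂² / L₁²`.
-/

theorem tanh_strictMono : StrictMono tanh := fun x y hxy => by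
  rwa [← artanh_tanh x, ← artanh_tanh y, artanh_lt_artanh_iff (tanh_bijOn.mapsTo trivial)
    (tanh_bijOn.mapsTo trivial)] at hxy

theorem range_tanh : Set.range tanh = Set.Ioo (-1) 1 := by
  rw [← Set.image_univ, tanh_bijOn.image_eq]

theorem tendsto_tanh_atTop : Tendsto tanh atTop (𝓝 1) :=
  tendsto_atTop_isLUB tanh_strictMono.monotone (range_tanh ▸ isLUB_Ioo (by norm_num))

theorem tendsto_tanh_atBot : Tendsto tanh atBot (𝓝 (-1)) :=
  tendsto_atBot_isGLB tanh_strictMono.monotone (range_tanh ▸ isGLB_Ioo (by norm_num))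

theorem tendsto_tanh_sq_cocompact : Tendsto (fun x => tanh x ^ 2) (cocompact ℝ) (𝓝 1) := by
  rw [cocompact_eq_atBot_atTop]
  exact .sup (by simpa using tendsto_tanh_atBot.pow 2) (by simpa using tendsto_tanh_atTop.pow 2)

theorem sqrt_add_mul_sinh_sq_div_cosh (a b x : ℝ) :
    √(a + b * sinh x ^ 2) / cosh x = √(a + (b - a) * tanh x ^ 2) := by
  have hcosh : cosh x ≠ 0 := (cosh_pos x).ne'
  rw [← sqrt_sq (cosh_pos x).le, ← sqrt_div' _ (sq_nonneg _), tanh_eq_sinh_div_cosh]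
  congr 1
  field_simp
  rw [cosh_sq]
  ring

theorem tendsto_sqrt_add_mul_sinh_sq_div_cosh_cocompact (a b : ℝ) :
    Tendsto (fun x => √(a + b * sinh x ^ 2) / cosh x) (cocompact ℝ) (𝓝 √b) := by
  simp only [sqrt_add_mul_sinh_sq_div_cosh]
  simpa using ((tendsto_tanh_sq_cocompact.const_mul (b - a)).const_add a).sqrt

theorem tendsto_sinh_div_sqrt_add_mul_sinh_sq_atTop (a : ℝ) {b : ℝ} (hb : 0 < b) :
    Tendsto (fun x => sinh x / √(a + b * sinh x ^ 2)) atTop (𝓝 (√b)⁻¹) := by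
  have hden := (tendsto_sqrt_add_mul_sinh_sq_div_cosh_cocompact a b).mono_left atTop_le_cocompact
  rw [← one_div]
  refine (tendsto_tanh_atTop.div hden (sqrt_pos.2 hb).ne').congr fun x => ?_
  rw [Pi.div_apply, tanh_eq_sinh_div_cosh, div_div_div_cancel_right₀ (cosh_pos x).ne']

theorem tendsto_arctan_const_mul_tanh_atTop (c : ℝ) :
    Tendsto (fun x => arctan (c * tanh x)) atTop (𝓝 (arctan c)) := by
  simpa [Function.comp_def] using
    (continuous_arctan.tendsto _).comp (tendsto_tanh_atTop.const_mul c)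

theorem tendsto_arctan_const_mul_tanh_atBot (c : ℝ) :
    Tendsto (fun x => arctan (c * tanh x)) atBot (𝓝 (-arctan c)) := by
  simpa [Function.comp_def, arctan_neg] using
    (continuous_arctan.tendsto _).comp (tendsto_tanh_atBot.const_mul c)

/-- The angle `γ₁` along the separatrix, as a function of the rescaled time `τ = A₂ t`. -/
def separatrixAngle (χ τ : ℝ) : ℝ :=
  arccos (√(3 / 5) * sinh τ / √(χ ^ 2 + (1 + χ ^ 2) * sinh τ ^ 2))

/-- The momentum `Γ₁` along the separatrix, as a function of the rescaled time `τ = A₂ t`. -/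
def separatrixMomentum (L1 G2 τ : ℝ) : ℝ :=
  G2 * √(5 / 3) * √(1 + (3 / 5) * (L1 ^ 2 / G2 ^ 2) * sinh τ ^ 2) / cosh τ

/-- The parameter `χ` of the separatrix; by the conventions for `√` and division it is `0` unless
`5 / 3 * G2 ^ 2 / L1 ^ 2 < 1`. -/
def separatrixChi (L1 G2 : ℝ) : ℝ :=
  √(2 / 3) * (G2 / L1) / √(1 - (5 / 3) * G2 ^ 2 / L1 ^ 2)

theorem separatrixAngle_neg (χ τ : ℝ) : separatrixAngle χ (-τ) = π - separatrixAngle χ τ := by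
  simp only [separatrixAngle, sinh_neg, neg_sq, mul_neg, neg_div, arccos_neg]

theorem tendsto_separatrixAngle_atTop (χ : ℝ) :
    Tendsto (separatrixAngle χ) atTop (𝓝 (arccos (√(3 / 5) / √(1 + χ ^ 2)))) := by
  have hratio :=
    tendsto_sinh_div_sqrt_add_mul_sinh_sq_atTop (χ ^ 2) (b := 1 + χ ^ 2) (by positivity)
  rw [div_eq_mul_inv]
  refine ((continuous_arccos.tendsto _).comp (hratio.const_mul √(3 / 5))).congr fun τ => ?_
  rw [Function.comp_apply, separatrixAngle, mul_div_assoc]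

theorem tendsto_separatrixAngle_atBot (χ : ℝ) :
    Tendsto (separatrixAngle χ) atBot (𝓝 (π - arccos (√(3 / 5) / √(1 + χ ^ 2)))) :=
  (((tendsto_separatrixAngle_atTop χ).comp tendsto_neg_atBot_atTop).const_sub π).congr fun τ => by
    rw [Function.comp_apply, separatrixAngle_neg, sub_sub_cancel]

theorem tendsto_separatrixMomentum_cocompact {L1 G2 : ℝ} (hL1 : 0 ≤ L1) (hG2 : 0 < G2) :
    Tendsto (separatrixMomentum L1 G2) (cocompact ℝ) (𝓝 L1) := by
  have hlimit : G2 * √(5 / 3) * √(3 / 5 * (L1 ^ 2 / G2 ^ 2)) = L1 := by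
    rw [mul_assoc, ← sqrt_mul (by norm_num), ← mul_assoc, ← div_pow,
      show (5 / 3 * (3 / 5) : ℝ) = 1 by norm_num, one_mul, sqrt_sq (by positivity),
      mul_div_cancel₀ _ hG2.ne']
  have hfactor := tendsto_sqrt_add_mul_sinh_sq_div_cosh_cocompact 1 (3 / 5 * (L1 ^ 2 / G2 ^ 2))
  have hproduct := hfactor.const_mul (G2 * √(5 / 3))
  rw [hlimit] at hproduct
  exact hproduct.congr fun τ => by rw [separatrixMomentum, mul_div_assoc]

theorem five_thirds_mul_sq_div_sq_lt_one {L1 G2 : ℝ} (hG2 : 0 ≤ G2)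
    (hlt : G2 < √(3 / 5) * L1) : 5 / 3 * G2 ^ 2 / L1 ^ 2 < 1 := by
  have hL1 : 0 < L1 := pos_of_mul_pos_right (hG2.trans_lt hlt) (sqrt_nonneg _)
  have hsq : G2 ^ 2 < (√(3 / 5) * L1) ^ 2 := by gcongr
  rw [mul_pow, sq_sqrt (by norm_num)] at hsq
  rw [div_lt_one (by positivity)]
  linarith

theorem one_add_separatrixChi_sq {L1 G2 : ℝ} (h : 5 / 3 * G2 ^ 2 / L1 ^ 2 < 1) :
    1 + separatrixChi L1 G2 ^ 2 = (1 - G2 ^ 2 / L1 ^ 2) / (1 - 5 / 3 * G2 ^ 2 / L1 ^ 2) := by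
  have hpos : 0 < 1 - 5 / 3 * G2 ^ 2 / L1 ^ 2 := sub_pos.2 h
  rw [separatrixChi, div_pow, mul_pow, sq_sqrt (by norm_num), sq_sqrt hpos.le, eq_div_iff hpos.ne',
    add_mul, div_mul_cancel₀ _ hpos.ne']
  ring

theorem arccos_sqrt_div_sqrt_one_add_separatrixChi_sq {L1 G2 γ : ℝ}
    (h : 5 / 3 * G2 ^ 2 / L1 ^ 2 < 1) (hγ : γ ∈ Set.Icc 0 (π / 2))
    (hsin : sin γ ^ 2 = 2 / (5 * (1 - G2 ^ 2 / L1 ^ 2))) :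
    arccos (√(3 / 5) / √(1 + separatrixChi L1 G2 ^ 2)) = γ := by
  have hcos_sq : cos γ ^ 2 = 3 / 5 / (1 + separatrixChi L1 G2 ^ 2) := by
    have hne : 1 - G2 ^ 2 / L1 ^ 2 ≠ 0 := by
      have : 0 ≤ G2 ^ 2 / L1 ^ 2 := by positivity
      rw [mul_div_assoc] at h
      linarith
    rw [cos_sq', hsin, one_add_separatrixChi_sq h, div_div_eq_mul_div]
    field_simp
    ring
  have hcos_nonneg : 0 ≤ cos γ := cos_nonneg_of_mem_Icc ⟨by linarith [hγ.1, pi_pos], hγ.2⟩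
  rw [← sqrt_div (by norm_num), ← hcos_sq, sqrt_sq hcos_nonneg,
    arccos_cos hγ.1 (by linarith [hγ.2, pi_pos])]

/-- **Heteroclinic asymptotics of the separatrix (Lemma 5.1, part 2).** -/
theorem quadrupolar_separatrix_heteroclinic
    (L1 G2 : ℝ) (hL1 : 0 < L1) (hG2 : 0 < G2)
    (hlt : G2 < Real.sqrt (3 / 5) * L1) (γ20 : ℝ)
    (γmin : ℝ) (hγmin : γmin ∈ Set.Ioo 0 (π / 2))
    (hsin : Real.sin γmin ^ 2 = 2 / (5 * (1 - G2 ^ 2 / L1 ^ 2))) :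
    let χ : ℝ := Real.sqrt (2 / 3) * (G2 / L1) / Real.sqrt (1 - (5 / 3) * G2 ^ 2 / L1 ^ 2)
    let A2 : ℝ := (6 / L1) * Real.sqrt (2 / 3) * Real.sqrt (1 - (5 / 3) * G2 ^ 2 / L1 ^ 2)
    let γ1 : ℝ → ℝ := fun t => Real.arccos (Real.sqrt (3 / 5) * Real.sinh (A2 * t) /
      Real.sqrt (χ ^ 2 + (1 + χ ^ 2) * Real.sinh (A2 * t) ^ 2))
    let Γ1 : ℝ → ℝ := fun t => G2 * Real.sqrt (5 / 3) *
      Real.sqrt (1 + (3 / 5) * (L1 ^ 2 / G2 ^ 2) * Real.sinh (A2 * t) ^ 2) / Real.cosh (A2 * t)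
    let γ2 : ℝ → ℝ := fun t => γ20 + (2 * G2 / L1 ^ 2) * t
      + Real.arctan (χ⁻¹ * Real.tanh (A2 * t))
    -- forward in time the separatrix converges to the periodic orbit through `(γ₁ᵐⁱⁿ, L₁)`
    Tendsto γ1 atTop (𝓝 γmin) ∧
    Tendsto Γ1 atTop (𝓝 L1) ∧
    Tendsto (fun t => γ2 t - γ20 - (2 * G2 / L1 ^ 2) * t) atTop (𝓝 (Real.arctan χ⁻¹)) ∧
    -- backward in time it converges to the periodic orbit through `(γ₁ᵐᵃˣ, L₁)`
    Tendsto γ1 atBot (𝓝 (π - γmin)) ∧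
    Tendsto Γ1 atBot (𝓝 L1) ∧
    Tendsto (fun t => γ2 t - γ20 - (2 * G2 / L1 ^ 2) * t) atBot (𝓝 (-Real.arctan χ⁻¹)) := by
  intro χ A2 γ1 Γ1 γ2
  have he := five_thirds_mul_sq_div_sq_lt_one hG2.le hlt
  have hA2 : 0 < A2 := mul_pos (by positivity) (sqrt_pos.2 (sub_pos.2 he))
  have htop : Tendsto (A2 * ·) atTop atTop := tendsto_id.const_mul_atTop hA2
  have hbot : Tendsto (A2 * ·) atBot atBot := tendsto_id.const_mul_atBot hA2
  have hangle : arccos (√(3 / 5) / √(1 + χ ^ 2)) = γmin :=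
    arccos_sqrt_div_sqrt_one_add_separatrixChi_sq he (Set.Ioo_subset_Icc_self hγmin) hsin
  have hmomentum := tendsto_separatrixMomentum_cocompact hL1.le hG2
  have hphase (t : ℝ) : γ2 t - γ20 - 2 * G2 / L1 ^ 2 * t = arctan (χ⁻¹ * tanh (A2 * t)) := by
    ring
  simp only [hphase, ← hangle]
  exact ⟨(tendsto_separatrixAngle_atTop χ).comp htop,
    (hmomentum.mono_left atTop_le_cocompact).comp htop,
    (tendsto_arctan_const_mul_tanh_atTop χ⁻¹).comp htop,
    (tendsto_separatrixAngle_atBot χ).comp hbot,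
    (hmomentum.mono_left atBot_le_cocompact).comp hbot,
    (tendsto_arctan_const_mul_tanh_atBot χ⁻¹).comp hbot⟩
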